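/- arXiv:2501.14076 — 2 statements merged into one kernel-verified Lean document; each statement's English description precedes it below -/
import Mathlib

section
/- Let μ be a regular cardinal and M a transitive model of ZFC⁻ such that o(M) = μ⁺ and μ is the largest cardinal of M. Then for any ordinal α < μ⁺: cof^M(α) = μ if and only if cof(α) = μ. -/
/- ## A framework for transitive class/set models of fragments of ZFC,
     inside the universe `ZFSet` of ZF sets. -/

open FirstOrder FirstOrder.Language

/-- The language of set theory: a single binary relation symbol `∈`. -/
inductive SetLRel : ℕ → Type
  | mem : SetLRel 2

/-- The first-order language of set theory. -/
def setL : FirstOrder.Language := ⟨fun _ => Empty, SetLRel⟩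

/-- Evaluation of a term of the language of set theory (terms are just variables). -/
def tval {n : ℕ} (v : Fin n → ZFSet) : setL.Term (Empty ⊕ Fin n) → ZFSet
  | .var (Sum.inl e) => e.elim
  | .var (Sum.inr i) => v i
  | .func f _ => f.elim

/-- Tarskian satisfaction of a formula of the language of set theory in a class `S` of
ZF-sets (equipped with true membership), under the assignment `v`. -/
def ZSat (S : Set ZFSet) : ∀ {n : ℕ}, setL.BoundedFormula Empty n → (Fin n → ZFSet) → Prop
  | _, .falsum, _ => False
  | _, .equal t u, v => tval v t = tval v u
  | _, .rel R ts, v =>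
      match R with
      | SetLRel.mem => tval v (ts 0) ∈ tval v (ts 1)
  | _, .imp φ ψ, v => ZSat S φ v → ZSat S ψ v
  | _, .all φ, v => ∀ x ∈ S, ZSat S φ (Fin.snoc v x)

/-- Satisfaction of a sentence in a class of ZF-sets. -/
def SatS (S : Set ZFSet) (σ : setL.Sentence) : Prop := ZSat S σ finZeroElim

/-- A class of ZF-sets is transitive. -/
def IsTransClass (S : Set ZFSet) : Prop := ∀ x ∈ S, ∀ y ∈ x, y ∈ S

/-- `r` is a well-ordering of the set `x`, from the point of view of the class `S`
(Kuratowski pairs code the relation; minimality is required for nonempty subsets of `x`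
lying in `S`). -/
def WellOrders (S : Set ZFSet) (r x : ZFSet) : Prop :=
  (∀ a ∈ x, ZFSet.pair a a ∉ r) ∧
  (∀ a ∈ x, ∀ b ∈ x, ∀ c ∈ x, ZFSet.pair a b ∈ r → ZFSet.pair b c ∈ r → ZFSet.pair a c ∈ r) ∧
  (∀ a ∈ x, ∀ b ∈ x, a ≠ b → (ZFSet.pair a b ∈ r ∨ ZFSet.pair b a ∈ r)) ∧
  (∀ y ∈ S, (∀ z ∈ y, z ∈ x) → y ≠ ∅ → ∃ m ∈ y, ∀ z ∈ y, ZFSet.pair z m ∉ r)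

/-- `S` is a transitive model of ZFC⁻, i.e. of ZFC stated with the Replacement Scheme and
the Well-Ordering Theorem but without the Power Set Axiom.  (Extensionality and Foundation
are automatic for transitive classes of ZF-sets.) -/
def ModelsZFCminus (S : Set ZFSet) : Prop :=
  IsTransClass S ∧
  (∅ : ZFSet) ∈ S ∧
  (∀ x ∈ S, ∀ y ∈ S, ({x, y} : ZFSet) ∈ S) ∧
  (∀ x ∈ S, (ZFSet.sUnion x : ZFSet) ∈ S) ∧
  ZFSet.omega ∈ S ∧
  (∀ (n : ℕ) (φ : setL.BoundedFormula Empty (n + 1)) (p : Fin n → ZFSet),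
    (∀ i, p i ∈ S) → ∀ a ∈ S, ∃ b ∈ S, ∀ y, y ∈ b ↔ (y ∈ a ∧ ZSat S φ (Fin.snoc p y))) ∧
  (∀ (n : ℕ) (φ : setL.BoundedFormula Empty (n + 2)) (p : Fin n → ZFSet),
    (∀ i, p i ∈ S) → ∀ a ∈ S,
      (∀ x ∈ a, ∃! y, y ∈ S ∧ ZSat S φ (Fin.snoc (Fin.snoc p x) y)) →
      ∃ b ∈ S, ∀ y, y ∈ b ↔ ∃ x ∈ a, y ∈ S ∧ ZSat S φ (Fin.snoc (Fin.snoc p x) y)) ∧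
  (∀ x ∈ S, ∃ r ∈ S, WellOrders S r x)

/-- `S` is a transitive model of ZFC. -/
def ModelsZFC (S : Set ZFSet) : Prop :=
  ModelsZFCminus S ∧ ∀ x ∈ S, ∃ p ∈ S, ∀ y, y ∈ p ↔ (y ∈ S ∧ y ⊆ x)

/-- `f` is (the graph of) a surjection of `a` onto `b`. -/
def SurjFun (f a b : ZFSet) : Prop :=
  ZFSet.IsFunc a b f ∧ ∀ y ∈ b, ∃ x ∈ a, ZFSet.pair x y ∈ f

/-- `f` is (the graph of) an injection of `a` into `b`. -/
def InjFun (f a b : ZFSet) : Prop :=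
  ZFSet.IsFunc a b f ∧ ∀ x ∈ a, ∀ x' ∈ a, ∀ y, ZFSet.pair x y ∈ f → ZFSet.pair x' y ∈ f → x = x'

/-- `f` is (the graph of) a cofinal function from `β` into the ordinal `α`. -/
def CofinalFun (f β α : ZFSet) : Prop :=
  ZFSet.IsFunc β α f ∧ ∀ ξ ∈ α, ∃ η ∈ β, ∃ ζ, ZFSet.pair η ζ ∈ f ∧ (ξ ∈ ζ ∨ ξ = ζ)

/-- `μ = cof(α)` as computed inside the class `S` (for `S = Set.univ`, the true cofinality). -/
def IsCofOf (S : Set ZFSet) (α μ : ZFSet) : Prop :=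
  μ ∈ S ∧ μ.IsOrdinal ∧ (∃ f ∈ S, CofinalFun f μ α) ∧
  ∀ ν ∈ S, ZFSet.IsOrdinal ν → (∃ f ∈ S, CofinalFun f ν α) → μ ⊆ ν

/-- `κ` is a cardinal from the point of view of the class `S`
(for `S = Set.univ`, a true cardinal). -/
def IsCardIn (S : Set ZFSet) (κ : ZFSet) : Prop :=
  κ.IsOrdinal ∧ ∀ α ∈ κ, ∀ f ∈ S, ¬ SurjFun f α κ

/-- `μ` is an (infinite) regular cardinal from the point of view of the class `S`. -/
def IsRegularIn (S : Set ZFSet) (μ : ZFSet) : Prop :=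
  ZFSet.omega ⊆ μ ∧ IsCardIn S μ ∧ IsCofOf S μ μ

/-- `ν = μ⁺`, the cardinal successor of `μ`, as computed in the class `S`. -/
def CardSuccIn (S : Set ZFSet) (μ ν : ZFSet) : Prop :=
  ν ∈ S ∧ IsCardIn S ν ∧ μ ∈ ν ∧ ∀ ξ ∈ S, IsCardIn S ξ → μ ∈ ξ → ν ⊆ ξ

/-- `μ` is the largest cardinal of the model `S`. -/
def IsLargestCardIn (S : Set ZFSet) (μ : ZFSet) : Prop :=
  μ ∈ S ∧ IsCardIn S μ ∧ ∀ x ∈ S, IsCardIn S x → x ⊆ μ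

/-- `α = sup A`, for `A` a collection of ordinals: `α` is the least ordinal above all of them. -/
def IsSupOf (α : ZFSet) (A : Set ZFSet) : Prop :=
  α.IsOrdinal ∧ (∀ a ∈ A, a ⊆ α) ∧ ∀ β : ZFSet, β.IsOrdinal → (∀ a ∈ A, a ⊆ β) → α ⊆ β

/-- `π` is an elementary embedding (for the language of set theory) from the class `S`
into the class `T`. -/
def IsElem (S T : Set ZFSet) (π : ZFSet → ZFSet) : Prop :=
  (∀ x ∈ S, π x ∈ T) ∧
  ∀ (n : ℕ) (φ : setL.BoundedFormula Empty n) (v : Fin n → ZFSet),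
    (∀ i, v i ∈ S) → (ZSat S φ v ↔ ZSat T φ (fun i => π (v i)))

/-- Definability (over `S`, for assignments in `S`) of a predicate on assignments. -/
def Dfn (S : Set ZFSet) (n : ℕ) (P : (Fin n → ZFSet) → Prop) : Prop :=
  ∃ φ : setL.BoundedFormula Empty n, ∀ v : Fin n → ZFSet, (∀ i, v i ∈ S) → (ZSat S φ v ↔ P v)

theorem Dfn.mem {S : Set ZFSet} {n : ℕ} (i j : Fin n) : Dfn S n (fun v => v i ∈ v j) :=
  ⟨.rel (L := setL) (l := 2) SetLRel.mem ![.var (Sum.inr i), .var (Sum.inr j)], fun v _ => by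
    simp [ZSat, tval]⟩

theorem Dfn.eq {S : Set ZFSet} {n : ℕ} (i j : Fin n) : Dfn S n (fun v => v i = v j) :=
  ⟨.equal (.var (Sum.inr i)) (.var (Sum.inr j)), fun v _ => by
    simp [ZSat, tval]⟩

theorem Dfn.imp {S : Set ZFSet} {n : ℕ} {P Q : (Fin n → ZFSet) → Prop}
    (hP : Dfn S n P) (hQ : Dfn S n Q) : Dfn S n (fun v => P v → Q v) := by
  obtain ⟨φ, hφ⟩ := hP
  obtain ⟨ψ, hψ⟩ := hQ
  refine ⟨.imp φ ψ, fun v hv => ?_⟩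
  simp only [ZSat, hφ v hv, hψ v hv]

theorem Dfn.not {S : Set ZFSet} {n : ℕ} {P : (Fin n → ZFSet) → Prop}
    (hP : Dfn S n P) : Dfn S n (fun v => ¬ P v) := by
  obtain ⟨φ, hφ⟩ := hP
  refine ⟨.imp φ .falsum, fun v hv => ?_⟩
  simp only [ZSat, hφ v hv]

theorem Dfn.congr {S : Set ZFSet} {n : ℕ} {P Q : (Fin n → ZFSet) → Prop}
    (hP : Dfn S n P) (h : ∀ v : Fin n → ZFSet, (∀ i, v i ∈ S) → (P v ↔ Q v)) : Dfn S n Q := by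
  obtain ⟨φ, hφ⟩ := hP
  exact ⟨φ, fun v hv => (hφ v hv).trans (h v hv)⟩

theorem Dfn.and {S : Set ZFSet} {n : ℕ} {P Q : (Fin n → ZFSet) → Prop}
    (hP : Dfn S n P) (hQ : Dfn S n Q) : Dfn S n (fun v => P v ∧ Q v) :=
  (hP.imp hQ.not).not.congr (fun v _ => by tauto)

theorem Dfn.or {S : Set ZFSet} {n : ℕ} {P Q : (Fin n → ZFSet) → Prop}
    (hP : Dfn S n P) (hQ : Dfn S n Q) : Dfn S n (fun v => P v ∨ Q v) :=
  (hP.not.imp hQ).congr (fun v _ => by tauto)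

theorem snoc_in {S : Set ZFSet} {n : ℕ} {v : Fin n → ZFSet} (hv : ∀ i, v i ∈ S) {x : ZFSet}
    (hx : x ∈ S) : ∀ i, (Fin.snoc v x : Fin (n + 1) → ZFSet) i ∈ S := by
  intro i
  refine Fin.lastCases ?_ (fun j => ?_) i
  · simpa using hx
  · simpa using hv j

theorem Dfn.all {S : Set ZFSet} {n : ℕ} {P : (Fin (n + 1) → ZFSet) → Prop}
    (hP : Dfn S (n + 1) P) : Dfn S n (fun v => ∀ x ∈ S, P (Fin.snoc v x)) := by
  obtain ⟨φ, hφ⟩ := hP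
  refine ⟨.all φ, fun v hv => ?_⟩
  simp only [ZSat]
  exact forall₂_congr fun x hx => hφ _ (snoc_in hv hx)

theorem Dfn.ex {S : Set ZFSet} {n : ℕ} {P : (Fin (n + 1) → ZFSet) → Prop}
    (hP : Dfn S (n + 1) P) : Dfn S n (fun v => ∃ x ∈ S, P (Fin.snoc v x)) :=
  hP.not.all.not.congr (fun v _ => by push Not; rfl)

theorem Dfn.upair {S : Set ZFSet} (hT : IsTransClass S) {n : ℕ} (i j k : Fin n) :
    Dfn S n (fun v => v k = ({v i, v j} : ZFSet)) := by
  have h1 : Dfn S n (fun v => ∀ x ∈ S, (x ∈ v k → (x = v i ∨ x = v j))) := by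
    have := ((Dfn.mem (S := S) (Fin.last n) k.castSucc).imp
      ((Dfn.eq (Fin.last n) i.castSucc).or (Dfn.eq (Fin.last n) j.castSucc))).all
    simpa using this
  refine ((h1.and (Dfn.mem i k)).and (Dfn.mem j k)).congr (fun v hv => ?_)
  constructor
  · rintro ⟨⟨h, hi⟩, hj⟩
    ext z
    rw [ZFSet.mem_pair]
    exact ⟨fun hz => h z (hT _ (hv k) _ hz) hz, by rintro (rfl | rfl) <;> assumption⟩
  · intro h
    rw [h]
    simp

theorem Dfn.opair {S : Set ZFSet} (hT : IsTransClass S)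
    (hP : ∀ x ∈ S, ∀ y ∈ S, ({x, y} : ZFSet) ∈ S) {n : ℕ} (i j k : Fin n) :
    Dfn S n (fun v => v k = ZFSet.pair (v i) (v j)) := by
  have h1 : Dfn S n (fun v => ∃ x ∈ S, ∃ y ∈ S, x = ({v i, v i} : ZFSet) ∧
      y = ({v i, v j} : ZFSet) ∧ v k = ({x, y} : ZFSet)) := by
    have := ((Dfn.upair hT i.castSucc.castSucc i.castSucc.castSucc (Fin.last n).castSucc).and
      ((Dfn.upair hT i.castSucc.castSucc j.castSucc.castSucc (Fin.last (n+1))).and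
       (Dfn.upair hT (Fin.last n).castSucc (Fin.last (n+1)) k.castSucc.castSucc))).ex.ex
    simpa only [Fin.snoc_castSucc, Fin.snoc_last] using this
  refine h1.congr (fun v hv => ?_)
  constructor
  · rintro ⟨x, hx, y, hy, rfl, rfl, h⟩
    simpa [ZFSet.pair] using h
  · intro h
    refine ⟨_, hP _ (hv i) _ (hv i), _, hP _ (hv i) _ (hv j), rfl, rfl, ?_⟩
    simpa [ZFSet.pair] using h

theorem pair_in {S : Set ZFSet} (hP : ∀ x ∈ S, ∀ y ∈ S, ({x, y} : ZFSet) ∈ S)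
    {x y : ZFSet} (hx : x ∈ S) (hy : y ∈ S) : ZFSet.pair x y ∈ S := by
  have h := hP _ (hP _ hx _ hx) _ (hP _ hx _ hy)
  simpa [ZFSet.pair] using h

theorem of_pair_in {S : Set ZFSet} (hT : IsTransClass S) {x y : ZFSet}
    (h : ZFSet.pair x y ∈ S) : x ∈ S ∧ y ∈ S := by
  have h1 : ({x, y} : ZFSet) ∈ S := hT _ h _ (by simp [ZFSet.pair])
  exact ⟨hT _ h1 _ (by simp), hT _ h1 _ (by simp)⟩

theorem Dfn.pmem {S : Set ZFSet} (hT : IsTransClass S)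
    (hP : ∀ x ∈ S, ∀ y ∈ S, ({x, y} : ZFSet) ∈ S) {n : ℕ} (i j k : Fin n) :
    Dfn S n (fun v => ZFSet.pair (v i) (v j) ∈ v k) := by
  have h1 : Dfn S n (fun v => ∃ x ∈ S, x = ZFSet.pair (v i) (v j) ∧ x ∈ v k) := by
    have := ((Dfn.opair hT hP i.castSucc j.castSucc (Fin.last n)).and
      (Dfn.mem (Fin.last n) k.castSucc)).ex
    simpa only [Fin.snoc_castSucc, Fin.snoc_last] using this
  refine h1.congr (fun v hv => ?_)
  constructor
  · rintro ⟨x, hx, rfl, h⟩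
    exact h
  · intro h
    exact ⟨_, pair_in hP (hv i) (hv j), rfl, h⟩

theorem repl {S : Set ZFSet} (hM : ModelsZFCminus S) {n : ℕ} {P : (Fin (n + 2) → ZFSet) → Prop}
    (hD : Dfn S (n + 2) P) (p : Fin n → ZFSet) (hp : ∀ i, p i ∈ S) (a : ZFSet) (ha : a ∈ S)
    (G : ZFSet → ZFSet) (hG : ∀ x ∈ a, G x ∈ S)
    (h : ∀ x ∈ a, ∀ y ∈ S, (P (Fin.snoc (Fin.snoc p x : Fin (n + 1) → ZFSet) y) ↔ y = G x)) :
    ∃ b ∈ S, ∀ y, y ∈ b ↔ ∃ x ∈ a, y = G x := by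
  obtain ⟨hT, -, -, -, -, -, hR, -⟩ := hM
  obtain ⟨φ, hφ⟩ := hD
  have key : ∀ x ∈ a, ∀ y ∈ S,
      (ZSat S φ (Fin.snoc (Fin.snoc p x : Fin (n + 1) → ZFSet) y) ↔ y = G x) :=
    fun x hx y hy => (hφ _ (snoc_in (snoc_in hp (hT _ ha _ hx)) hy)).trans (h x hx y hy)
  obtain ⟨b, hb, hb'⟩ := hR n φ p hp a ha (fun x hx =>
    ⟨G x, ⟨hG x hx, (key x hx _ (hG x hx)).2 rfl⟩, fun y hy => (key x hx y hy.1).1 hy.2⟩)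
  refine ⟨b, hb, fun y => (hb' y).trans ?_⟩
  constructor
  · rintro ⟨x, hx, hy, hz⟩
    exact ⟨x, hx, (key x hx y hy).1 hz⟩
  · rintro ⟨x, hx, rfl⟩
    exact ⟨x, hx, hG x hx, (key x hx _ (hG x hx)).2 rfl⟩

theorem graph_func {a c b : ZFSet} {H : ZFSet → ZFSet} (hH : ∀ x ∈ a, H x ∈ c)
    (hb : ∀ y, y ∈ b ↔ ∃ x ∈ a, y = ZFSet.pair x (H x)) :
    ZFSet.IsFunc a c b ∧ ∀ x y, ZFSet.pair x y ∈ b ↔ x ∈ a ∧ y = H x := by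
  have h2 : ∀ x y, ZFSet.pair x y ∈ b ↔ x ∈ a ∧ y = H x := by
    intro x y
    rw [hb]
    constructor
    · rintro ⟨z, hz, h⟩
      obtain ⟨rfl, rfl⟩ := ZFSet.pair_inj.1 h
      exact ⟨hz, rfl⟩
    · rintro ⟨hx, rfl⟩
      exact ⟨x, hx, rfl⟩
  refine ⟨⟨fun z hz => ?_, fun z hz => ⟨H z, (h2 _ _).2 ⟨hz, rfl⟩, fun w hw => ((h2 _ _).1 hw).2⟩⟩, h2⟩
  obtain ⟨x, hx, rfl⟩ := (hb z).1 hz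
  exact ZFSet.pair_mem_prod.2 ⟨hx, hH x hx⟩

/-- A function graph gives a Lean function. -/
theorem func_fun {a c f : ZFSet} (hf : ZFSet.IsFunc a c f) :
    ∃ F : ZFSet → ZFSet, (∀ x ∈ a, F x ∈ c) ∧ ∀ x y, ZFSet.pair x y ∈ f ↔ x ∈ a ∧ y = F x := by
  classical
  obtain ⟨hs, hu⟩ := hf
  choose! F hF hF' using hu
  refine ⟨F, fun x hx => (ZFSet.pair_mem_prod.1 (hs (hF x hx))).2, fun x y => ⟨fun h => ?_, ?_⟩⟩
  · have hx := (ZFSet.pair_mem_prod.1 (hs h)).1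
    exact ⟨hx, hF' x hx y h⟩
  · rintro ⟨hx, rfl⟩
    exact hF x hx

theorem comp_in {S : Set ZFSet} (hM : ModelsZFCminus S) {a b c g f : ZFSet}
    (ha : a ∈ S) (hg : g ∈ S) (hf : f ∈ S)
    (hgF : ZFSet.IsFunc a b g) (hfF : ZFSet.IsFunc b c f) :
    ∃ k ∈ S, ZFSet.IsFunc a c k ∧
      ∀ x z, ZFSet.pair x z ∈ k ↔ ∃ y, ZFSet.pair x y ∈ g ∧ ZFSet.pair y z ∈ f := by
  have hT := hM.1
  have hP := hM.2.2.1
  obtain ⟨G, hG, hG'⟩ := func_fun hgF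
  obtain ⟨F, hF, hF'⟩ := func_fun hfF
  have hD : Dfn S 4 (fun v => ∃ y ∈ S, ∃ z ∈ S, ZFSet.pair (v 2) y ∈ v 0 ∧
      ZFSet.pair y z ∈ v 1 ∧ v 3 = ZFSet.pair (v 2) z) := by
    have := ((Dfn.pmem hT hP (n := 6) (2 : Fin 4).castSucc.castSucc (Fin.last 4).castSucc
        (0 : Fin 4).castSucc.castSucc).and
      ((Dfn.pmem hT hP (Fin.last 4).castSucc (Fin.last 5) (1 : Fin 4).castSucc.castSucc).and
       (Dfn.opair hT hP (2 : Fin 4).castSucc.castSucc (Fin.last 5)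
         (3 : Fin 4).castSucc.castSucc))).ex.ex
    simpa only [Fin.snoc_castSucc, Fin.snoc_last] using this
  have hGF : ∀ x ∈ a, ZFSet.pair x (G x) ∈ S ∧ ZFSet.pair (G x) (F (G x)) ∈ S := fun x hx =>
    ⟨hT _ hg _ ((hG' _ _).2 ⟨hx, rfl⟩), hT _ hf _ ((hF' _ _).2 ⟨hG x hx, rfl⟩)⟩
  obtain ⟨k, hk, hk'⟩ := repl hM hD ![g, f] (by intro i; fin_cases i <;> simpa) a ha
    (fun x => ZFSet.pair x (F (G x)))
    (fun x hx => pair_in hP (hT _ ha _ hx) (of_pair_in hT (hGF x hx).2).2)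
    (fun x hx y hy => by
      have e0 : (Fin.snoc (Fin.snoc ![g, f] x : Fin 3 → ZFSet) y : Fin 4 → ZFSet) 0 = g := rfl
      have e1 : (Fin.snoc (Fin.snoc ![g, f] x : Fin 3 → ZFSet) y : Fin 4 → ZFSet) 1 = f := rfl
      have e2 : (Fin.snoc (Fin.snoc ![g, f] x : Fin 3 → ZFSet) y : Fin 4 → ZFSet) 2 = x := rfl
      have e3 : (Fin.snoc (Fin.snoc ![g, f] x : Fin 3 → ZFSet) y : Fin 4 → ZFSet) 3 = y := rfl
      simp only [e0, e1, e2, e3, hG', hF']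
      constructor
      · rintro ⟨y, -, z, -, ⟨-, rfl⟩, ⟨-, rfl⟩, h⟩
        exact h
      · intro h
        exact ⟨_, (of_pair_in hT (hGF x hx).1).2, _, (of_pair_in hT (hGF x hx).2).2,
          ⟨hx, rfl⟩, ⟨hG x hx, rfl⟩, h⟩)
  obtain ⟨h1, h2⟩ := graph_func (fun x hx => hF _ (hG x hx)) hk'
  refine ⟨k, hk, h1, fun x z => ?_⟩
  rw [h2]
  simp only [hG', hF']
  constructor
  · rintro ⟨hx, rfl⟩
    exact ⟨_, ⟨hx, rfl⟩, hG x hx, rfl⟩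
  · rintro ⟨y, ⟨hx, rfl⟩, -, rfl⟩
    exact ⟨hx, rfl⟩

theorem retr_in {S : Set ZFSet} (hM : ModelsZFCminus S) {a b c : ZFSet}
    (ha : a ∈ S) (hb : b ∈ S) (hc : ∀ x ∈ a, x ∉ b → c ∈ b) (hcS : c ∈ S) :
    ∃ k ∈ S, ZFSet.IsFunc a b k ∧ ∀ x ∈ a, x ∈ b → ZFSet.pair x x ∈ k := by
  classical
  have hT := hM.1
  have hP := hM.2.2.1
  have hD : Dfn S 4 (fun v => (v 2 ∈ v 0 ∧ v 3 = ZFSet.pair (v 2) (v 2)) ∨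
      (¬ (v 2 ∈ v 0) ∧ v 3 = ZFSet.pair (v 2) (v 1))) :=
    ((Dfn.mem 2 0).and (Dfn.opair hT hP 2 2 3)).or ((Dfn.mem 2 0).not.and (Dfn.opair hT hP 2 1 3))
  obtain ⟨k, hk, hk'⟩ := repl hM hD ![b, c] (by intro i; fin_cases i <;> simpa) a ha
    (fun x => ZFSet.pair x (if x ∈ b then x else c))
    (fun x hx => pair_in hP (hT _ ha _ hx) (by split_ifs; exacts [hT _ ha _ hx, hcS]))
    (fun x hx y hy => by
      have e0 : (Fin.snoc (Fin.snoc ![b, c] x : Fin 3 → ZFSet) y : Fin 4 → ZFSet) 0 = b := rfl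
      have e1 : (Fin.snoc (Fin.snoc ![b, c] x : Fin 3 → ZFSet) y : Fin 4 → ZFSet) 1 = c := rfl
      have e2 : (Fin.snoc (Fin.snoc ![b, c] x : Fin 3 → ZFSet) y : Fin 4 → ZFSet) 2 = x := rfl
      have e3 : (Fin.snoc (Fin.snoc ![b, c] x : Fin 3 → ZFSet) y : Fin 4 → ZFSet) 3 = y := rfl
      simp only [e0, e1, e2, e3]
      by_cases h : x ∈ b <;> simp [h])
  obtain ⟨h1, h2⟩ := graph_func (c := b) (fun x hx => by
    split_ifs with h; exacts [h, hc x hx h]) hk'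
  exact ⟨k, hk, h1, fun x hx hxb => (h2 _ _).2 ⟨hx, by simp [hxb]⟩⟩

/-- Every nonempty ordinal of the model is, in the model, a surjective image of `μ`. -/
theorem surj_in {S : Set ZFSet} (hM : ModelsZFCminus S) {μ α : ZFSet}
    (hlc : IsLargestCardIn S μ) (hα : α ∈ S) (hαo : α.IsOrdinal) (hne : ∃ x, x ∈ α) :
    ∃ f ∈ S, SurjFun f μ α := by
  have hT := hM.1
  let B : Set ZFSet := {β | β ∈ S ∧ β.IsOrdinal ∧ ∃ f ∈ S, SurjFun f β α}
  have hB : B.Nonempty := by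
    obtain ⟨k, hk, h1, h2⟩ := retr_in hM hα hα (fun x hx h => absurd hx h) hM.2.1
    exact ⟨α, hα, hαo, k, hk, h1, fun y hy => ⟨y, hy, h2 y hy hy⟩⟩
  obtain ⟨β, ⟨hβ, hβo, f, hf, hff, hfs⟩, hmin⟩ := ZFSet.mem_wf.has_min B hB
  have hcard : IsCardIn S β := by
    refine ⟨hβo, fun γ hγ g hg hgs => ?_⟩
    have hγS := hT _ hβ _ hγ
    obtain ⟨k, hk, h1, h2⟩ := comp_in hM hγS hg hf hgs.1 hff
    refine hmin γ ⟨hγS, hβo.mem hγ, k, hk, h1, fun y hy => ?_⟩ hγ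
    obtain ⟨x, hx, hxy⟩ := hfs y hy
    obtain ⟨w, hw, hwx⟩ := hgs.2 x hx
    exact ⟨w, hw, (h2 _ _).2 ⟨x, hwx, hxy⟩⟩
  have hsub := hlc.2.2 β hβ hcard
  obtain ⟨y, hy⟩ := hne
  obtain ⟨c, hc, -⟩ := hfs y hy
  obtain ⟨r, hr, hr1, hr2⟩ := retr_in hM hlc.1 hβ (fun _ _ _ => hc) (hT _ hβ _ hc)
  obtain ⟨k, hk, h1, h2⟩ := comp_in hM hlc.1 hr hf hr1 hff
  refine ⟨k, hk, h1, fun y hy => ?_⟩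
  obtain ⟨x, hx, hxy⟩ := hfs y hy
  exact ⟨x, hsub hx, (h2 _ _).2 ⟨x, hr2 x (hsub hx) hx, hxy⟩⟩

/-- Let `μ` be a regular cardinal and `M` a transitive model of ZFC⁻ such
that `o(M) = μ⁺` and `μ` is the largest cardinal of `M`.  Then for any `α < μ⁺`:
`cof^M(α) = μ` iff `cof(α) = μ`. -/
theorem cofinality_lemma (μ ν M : ZFSet)
    (hμ : IsRegularIn Set.univ μ)
    (hM : ModelsZFCminus M.toSet)
    (hν : CardSuccIn Set.univ μ ν)
    (hoM : ∀ x : ZFSet, (x ∈ M ∧ x.IsOrdinal) ↔ x ∈ ν)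
    (hlc : IsLargestCardIn M.toSet μ) :
    ∀ α ∈ ν, (IsCofOf M.toSet α μ ↔ IsCofOf Set.univ α μ) := by
  intro α hα
  obtain ⟨hαM, hαo⟩ := (hoM α).2 hα
  have hT := hM.1
  have hμo : μ.IsOrdinal := hμ.2.1.1
  have hμM : μ ∈ M.toSet := hlc.1
  constructor
  · rintro ⟨-, -, ⟨f, hf, hff, hfc⟩, hmin⟩
    refine ⟨trivial, hμo, ⟨f, trivial, hff, hfc⟩, ?_⟩
    rintro β - hβo ⟨g, -, hgf, hgc⟩
    by_contra hns
    obtain ⟨F, hF, hF'⟩ := func_fun hff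
    obtain ⟨G, hG, hG'⟩ := func_fun hgf
    have hex : ∀ η ∈ β, ∃ ξ ∈ μ, G η ∈ F ξ ∨ G η = F ξ := by
      intro η hη
      obtain ⟨ξ, hξ, ζ, hζ, h⟩ := hfc _ (hG η hη)
      obtain ⟨-, rfl⟩ := (hF' _ _).1 hζ
      exact ⟨ξ, hξ, h⟩
    choose! H hH hH' using hex
    have hb : ∀ y, y ∈ ZFSet.sep (fun p => ∃ x ∈ β, p = ZFSet.pair x (H x)) (ZFSet.prod β μ) ↔
        ∃ x ∈ β, y = ZFSet.pair x (H x) := by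
      intro y
      rw [ZFSet.mem_sep]
      refine ⟨fun h => h.2, fun h => ⟨?_, h⟩⟩
      obtain ⟨x, hx, rfl⟩ := h
      exact ZFSet.pair_mem_prod.2 ⟨hx, hH x hx⟩
    obtain ⟨h1, h2⟩ := graph_func hH hb
    have hnc : ∃ δ ∈ μ, ∀ η ∈ β, H η ∈ δ := by
      by_contra hcon
      push Not at hcon
      refine hns (hμ.2.2.2.2.2 β trivial hβo ⟨_, trivial, h1, fun ξ hξ => ?_⟩)
      obtain ⟨η, hη, hn⟩ := hcon ξ hξ
      refine ⟨η, hη, H η, (h2 _ _).2 ⟨hη, rfl⟩, ?_⟩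
      rcases (hμo.mem hξ).mem_trichotomous (hμo.mem (hH η hη)) with h | h | h
      · exact Or.inl h
      · exact Or.inr h
      · exact absurd h hn
    obtain ⟨δ, hδ, hHδ⟩ := hnc
    have hδM : δ ∈ M.toSet := hT _ hμM _ hδ
    have hδμ := hμo.subset_of_mem hδ
    obtain ⟨r, hr, hr1, hr2⟩ := retr_in hM hδM hμM (fun x hx h => absurd (hδμ hx) h) hM.2.1
    obtain ⟨k, hk, k1, k2⟩ := comp_in hM hδM hr hf hr1 hff
    have := hmin δ hδM (hμo.mem hδ) ⟨k, hk, k1, fun ξ hξ => by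
      obtain ⟨η, hη, ζ, hζ, h⟩ := hgc ξ hξ
      obtain ⟨-, rfl⟩ := (hG' _ _).1 hζ
      have hHη := hHδ η hη
      refine ⟨H η, hHη, F (H η),
        (k2 _ _).2 ⟨H η, hr2 _ hHη (hδμ hHη), (hF' _ _).2 ⟨hδμ hHη, rfl⟩⟩, ?_⟩
      have hFo := hαo.mem (hF _ (hδμ hHη))
      rcases h with h | rfl <;> rcases hH' η hη with h' | h'
      · exact Or.inl (hFo.mem_trans h h')
      · exact Or.inl (h' ▸ h)
      · exact Or.inl h'
      · exact Or.inr h'⟩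
    exact ZFSet.mem_irrefl _ (this hδ)
  · rintro ⟨-, -, ⟨f, -, hff, hfc⟩, hmin⟩
    refine ⟨hμM, hμo, ?_, fun β _ hβo ⟨g, _, hg⟩ => hmin β trivial hβo ⟨g, trivial, hg⟩⟩
    obtain ⟨F, hF, -⟩ := func_fun hff
    obtain ⟨k, hk, k1, k2⟩ := surj_in hM hlc hαM hαo ⟨_, hF _ (hμ.1 ZFSet.omega_zero)⟩
    refine ⟨k, hk, k1, fun ξ hξ => ?_⟩
    obtain ⟨x, hx, h⟩ := k2 ξ hξ
    exact ⟨x, hx, ξ, h, Or.inr rfl⟩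
end

section
/- Let μ be a regular cardinal and let M, N be transitive models of ZFC⁻ such that o(M) = o(N) = μ⁺ and μ is the largest cardinal of both M and N. Suppose π : M → N is elementary. Then the set of fixed points of π is a member of the μ-club filter C_{μ,μ⁺} on μ⁺. -/
/- ## A framework for transitive class/set models of fragments of ZFC,
     inside the universe `ZFSet` of ZF sets. -/

open FirstOrder FirstOrder.Language

/-- `C` is a `μ`-club in `ν = μ⁺`: a cofinal subset of `ν` closed under (suprema of)
increasing `μ`-sequences. -/
def MuClub (μ ν : ZFSet) (C : Set ZFSet) : Prop :=
  (∀ x ∈ C, x ∈ ν) ∧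
  (∀ β ∈ ν, ∃ γ ∈ C, β ∈ γ ∨ β = γ) ∧
  (∀ s : ZFSet → ZFSet,
    (∀ ξ ∈ μ, s ξ ∈ C) →
    (∀ ξ η : ZFSet, ξ ∈ η → η ∈ μ → s ξ ∈ s η) →
    ∀ γ ∈ ν, IsSupOf γ {y | ∃ ξ ∈ μ, y = s ξ} → γ ∈ C)

/-- The `μ`-club filter `C_{μ,μ⁺}` on `ν = μ⁺`: the filter generated by the cofinal subsets
of `ν` which are closed under increasing `μ`-sequences. -/
def muClubFilter (μ ν : ZFSet) : Filter ZFSet := Filter.generate {C | MuClub μ ν C}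

namespace FPM

abbrev Fm (n : ℕ) := setL.BoundedFormula Empty n

def vF {n : ℕ} (i : Fin n) : setL.Term (Empty ⊕ Fin n) := .var (Sum.inr i)
def memF {n : ℕ} (i j : Fin n) : Fm n := .rel SetLRel.mem ![vF i, vF j]
def eqF {n : ℕ} (i j : Fin n) : Fm n := .equal (vF i) (vF j)
def ntF {n : ℕ} (φ : Fm n) : Fm n := .imp φ .falsum
def andF {n : ℕ} (φ ψ : Fm n) : Fm n := ntF (.imp φ (ntF ψ))
def orF {n : ℕ} (φ ψ : Fm n) : Fm n := .imp (ntF φ) ψ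
def exF {n : ℕ} (φ : Fm (n+1)) : Fm n := ntF (.all (ntF φ))

variable {S : Set ZFSet} {n : ℕ}

theorem sat_mem (i j : Fin n) (v : Fin n → ZFSet) : ZSat S (memF i j) v ↔ v i ∈ v j := Iff.rfl
theorem sat_eq (i j : Fin n) (v : Fin n → ZFSet) : ZSat S (eqF i j) v ↔ v i = v j := Iff.rfl
theorem sat_nt (φ : Fm n) (v : Fin n → ZFSet) : ZSat S (ntF φ) v ↔ ¬ ZSat S φ v := Iff.rfl
theorem sat_imp (φ ψ : Fm n) (v : Fin n → ZFSet) :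
    ZSat S (.imp φ ψ) v ↔ (ZSat S φ v → ZSat S ψ v) := Iff.rfl
theorem sat_all (φ : Fm (n+1)) (v : Fin n → ZFSet) :
    ZSat S (.all φ) v ↔ ∀ x ∈ S, ZSat S φ (Fin.snoc v x) := Iff.rfl
theorem sat_and (φ ψ : Fm n) (v : Fin n → ZFSet) :
    ZSat S (andF φ ψ) v ↔ (ZSat S φ v ∧ ZSat S ψ v) := by
  simp only [andF, sat_nt, sat_imp]; tauto
theorem sat_or (φ ψ : Fm n) (v : Fin n → ZFSet) :
    ZSat S (orF φ ψ) v ↔ (ZSat S φ v ∨ ZSat S ψ v) := by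
  simp only [orF, sat_nt, sat_imp]; tauto
theorem sat_ex (φ : Fm (n+1)) (v : Fin n → ZFSet) :
    ZSat S (exF φ) v ↔ ∃ x ∈ S, ZSat S φ (Fin.snoc v x) := by
  simp only [exF, sat_nt, sat_all]; push Not; rfl

/-- the part of the model axioms used for pairs -/
def Good (S : Set ZFSet) : Prop :=
  IsTransClass S ∧ ∀ x ∈ S, ∀ y ∈ S, ({x, y} : ZFSet) ∈ S

theorem Good.pair (h : Good S) {x y : ZFSet} (hx : x ∈ S) (hy : y ∈ S) : ZFSet.pair x y ∈ S := by
  unfold ZFSet.pair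
  refine h.2 _ ?_ _ (h.2 _ hx _ hy)
  rw [← ZFSet.pair_eq_singleton]; exact h.2 _ hx _ hx

/-- `p` is the unordered pair of `x, y` -/
def upF (p x y : Fin n) : Fm n :=
  andF (memF x p) (andF (memF y p)
    (.all (.imp (memF (Fin.last n) p.castSucc)
      (orF (eqF (Fin.last n) x.castSucc) (eqF (Fin.last n) y.castSucc)))))

theorem sat_up (h : Good S) (p x y : Fin n) (v : Fin n → ZFSet) (hp : v p ∈ S) :
    ZSat S (upF p x y) v ↔ v p = {v x, v y} := by
  simp only [upF, sat_and, sat_all, sat_imp, sat_or, sat_mem, sat_eq, Fin.snoc_last,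
    Fin.snoc_castSucc]
  constructor
  · rintro ⟨h1, h2, h3⟩
    ext z
    rw [ZFSet.mem_pair]
    constructor
    · intro hz; exact h3 z (h.1 _ hp _ hz) hz
    · rintro (rfl | rfl) <;> assumption
  · intro e
    rw [e]; simp

def opF (p x y : Fin n) : Fm n :=
  exF (exF (andF (upF (Fin.last n).castSucc x.castSucc.castSucc x.castSucc.castSucc)
    (andF (upF (Fin.last (n+1)) x.castSucc.castSucc y.castSucc.castSucc)
      (upF p.castSucc.castSucc (Fin.last n).castSucc (Fin.last (n+1))))))

theorem sat_op (h : Good S) (p x y : Fin n) (v : Fin n → ZFSet) (hp : v p ∈ S)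
    (hx : v x ∈ S) (hy : v y ∈ S) :
    ZSat S (opF p x y) v ↔ v p = ZFSet.pair (v x) (v y) := by
  simp only [opF, sat_ex, sat_and]
  constructor
  · rintro ⟨a, ha, b, hb, h1, h2, h3⟩
    rw [sat_up h _ _ _ _ (by simpa [Fin.snoc_last, Fin.snoc_castSucc])] at h1 h2 h3
    simp only [Fin.snoc_last, Fin.snoc_castSucc] at h1 h2 h3
    rw [h3, h1, h2, ZFSet.pair_eq_singleton]; rfl
  · intro e
    refine ⟨{v x, v x}, h.2 _ hx _ hx, {v x, v y}, h.2 _ hx _ hy, ?_, ?_, ?_⟩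
    · rw [sat_up h] <;> simp only [Fin.snoc_last, Fin.snoc_castSucc]
      exact h.2 _ hx _ hx
    · rw [sat_up h] <;> simp only [Fin.snoc_last, Fin.snoc_castSucc]
      exact h.2 _ hx _ hy
    · rw [sat_up h] <;> simp only [Fin.snoc_last, Fin.snoc_castSucc]
      · rw [e, ZFSet.pair_eq_singleton]; rfl
      · exact hp

/-- the ordered pair of `x, y` belongs to `g` -/
def pmF (g x y : Fin n) : Fm n :=
  exF (andF (memF (Fin.last n) g.castSucc) (opF (Fin.last n) x.castSucc y.castSucc))

theorem sat_pm (h : Good S) (g x y : Fin n) (v : Fin n → ZFSet)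
    (hx : v x ∈ S) (hy : v y ∈ S) :
    ZSat S (pmF g x y) v ↔ ZFSet.pair (v x) (v y) ∈ v g := by
  simp only [pmF, sat_ex, sat_and]
  constructor
  · rintro ⟨p, hp, h1, h2⟩
    rw [sat_op h] at h2 <;> simp only [Fin.snoc_last, Fin.snoc_castSucc] at *
    all_goals first | assumption | skip
    rw [sat_mem] at h1
    simp only [Fin.snoc_last, Fin.snoc_castSucc] at h1
    rwa [← h2]
  · intro e
    refine ⟨_, h.pair hx hy, ?_, ?_⟩
    · rw [sat_mem]; simpa only [Fin.snoc_last, Fin.snoc_castSucc]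
    · rw [sat_op h] <;> simp only [Fin.snoc_last, Fin.snoc_castSucc]
      exacts [h.pair hx hy, hx, hy]

theorem good_of (h : ModelsZFCminus S) : Good S := ⟨h.1, h.2.2.1⟩

/-- ordinals -/
def ordF : Fm 1 :=
  andF (.all (.imp (memF 1 0) (.all (.imp (memF 2 1) (memF 2 0)))))
    (.all (.imp (memF 1 0) (.all (.imp (memF 2 1) (.all (.imp (memF 3 2) (memF 3 1)))))))

theorem sat_ord (h : Good S) {x : ZFSet} (hx : x ∈ S) : ZSat S ordF ![x] ↔ x.IsOrdinal := by
  rw [ordF, sat_and]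
  change ((∀ y ∈ S, y ∈ x → ∀ z ∈ S, z ∈ y → z ∈ x) ∧
    (∀ w ∈ S, w ∈ x → ∀ z ∈ S, z ∈ w → ∀ y ∈ S, y ∈ z → y ∈ w)) ↔ _
  constructor
  · rintro ⟨h1, h2⟩
    refine ⟨fun y hy z hz => ?_, fun {y z w} hy hz hw => ?_⟩
    · have := h.1 _ hx _ hy
      exact h1 _ this hy _ (h.1 _ this _ hz) hz
    · have a := h.1 _ hx _ hw
      have b := h.1 _ a _ hz
      exact h2 _ a hw _ b hz _ (h.1 _ b _ hy) hy
  · intro o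
    exact ⟨fun y _ hy z _ hz => o.mem_trans hz hy, fun w _ hw z _ hz y _ hy => o.mem_trans' hy hz hw⟩

/-- g, ξ, δ -/
def bndF : Fm 3 := .all (.imp (memF 3 1) (.all (.imp (pmF 0 3 4) (memF 4 2))))

theorem sat_bnd (h : Good S) {g a b : ZFSet} (ha : a ∈ S) :
    ZSat S bndF ![g, a, b] ↔ ∀ x ∈ a, ∀ y ∈ S, ZFSet.pair x y ∈ g → y ∈ b := by
  have key : ∀ x ∈ S, ∀ y ∈ S, ZSat S (pmF 0 3 4) (Fin.snoc (Fin.snoc ![g,a,b] x : Fin 4 → ZFSet) y : Fin 5 → ZFSet) ↔ ZFSet.pair x y ∈ g :=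
    fun x hx y hy => sat_pm h 0 3 4 _ hx hy
  constructor
  · intro H x hx y hy hp
    exact H x (h.1 _ ha _ hx) hx y hy ((key x (h.1 _ ha _ hx) y hy).2 hp)
  · intro H x hx hxa y hy hp
    exact H x hxa y hy ((key x hx y hy).1 hp)

/-- b, a, g -/
def srjF : Fm 3 := .all (.imp (memF 3 0) (exF (andF (memF 4 1) (pmF 2 4 3))))

theorem sat_srj (h : Good S) {g a b : ZFSet} (ha : a ∈ S) (hb : b ∈ S) :
    ZSat S srjF ![b, a, g] ↔ ∀ y ∈ b, ∃ x ∈ a, ZFSet.pair x y ∈ g := by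
  have key : ∀ x ∈ S, ∀ y ∈ S, ZSat S (pmF 2 4 3) (Fin.snoc (Fin.snoc ![b,a,g] y : Fin 4 → ZFSet) x : Fin 5 → ZFSet) ↔ ZFSet.pair x y ∈ g :=
    fun x hx y hy => sat_pm h 2 4 3 _ hx hy
  rw [srjF, sat_all]
  simp only [sat_imp, sat_ex, sat_and]
  constructor
  · intro H y hy
    obtain ⟨x, hx, hxa, hp⟩ := H y (h.1 _ hb _ hy) hy
    exact ⟨x, hxa, (key x hx y (h.1 _ hb _ hy)).1 hp⟩
  · intro H y hy hyb
    obtain ⟨x, hx, hp⟩ := H y hyb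
    exact ⟨x, h.1 _ ha _ hx, hx, (key x (h.1 _ ha _ hx) y hy).2 hp⟩

/-- b, a, f -/
def subF : Fm 3 := .all (.imp (memF 3 2) (exF (andF (memF 4 1) (exF (andF (memF 5 0) (opF 3 4 5))))))

theorem sat_sub (h : Good S) {g a b : ZFSet} (hg : g ∈ S) (ha : a ∈ S) (hb : b ∈ S) :
    ZSat S subF ![b, a, g] ↔ g ⊆ ZFSet.prod a b := by
  have key : ∀ p ∈ S, ∀ x ∈ S, ∀ y ∈ S, ZSat S (opF 3 4 5) (Fin.snoc (Fin.snoc (Fin.snoc ![b,a,g] p : Fin 4 → ZFSet) x : Fin 5 → ZFSet) y : Fin 6 → ZFSet) ↔ p = ZFSet.pair x y :=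
    fun p hp x hx y hy => sat_op h 3 4 5 _ hp hx hy
  rw [subF, sat_all]
  simp only [sat_imp, sat_ex, sat_and]
  constructor
  · intro H p hp
    obtain ⟨x, hx, hxa, y, hy, hyb, e⟩ := H p (h.1 _ hg _ hp) hp
    exact ZFSet.mem_prod.2 ⟨x, hxa, y, hyb, (key p (h.1 _ hg _ hp) x hx y hy).1 e⟩
  · intro H p hp hpg
    obtain ⟨x, hx, y, hy, e⟩ := ZFSet.mem_prod.1 (H hpg)
    have hx' := h.1 _ ha _ hx
    have hy' := h.1 _ hb _ hy
    exact ⟨x, hx', hx, y, hy', hy, (key p hp x hx' y hy').2 e⟩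

/-- b, a, f -/
def funF : Fm 3 := .all (.imp (memF 3 1) (exF (andF (pmF 2 3 4) (.all (.imp (pmF 2 3 5) (eqF 5 4))))))

theorem pair_mem_of (h : Good S) {g x y : ZFSet} (hg : g ∈ S) (hp : ZFSet.pair x y ∈ g) : y ∈ S := by
  have h1 := h.1 _ hg _ hp
  have h2 : ({x, y} : ZFSet) ∈ S := h.1 _ h1 _ (by simp [ZFSet.pair])
  exact h.1 _ h2 _ (by simp)

theorem sat_fun (h : Good S) {g a b : ZFSet} (hg : g ∈ S) (ha : a ∈ S) :
    ZSat S funF ![b, a, g] ↔ ∀ z ∈ a, ∃! w, ZFSet.pair z w ∈ g := by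
  have key : ∀ x ∈ S, ∀ y ∈ S, ZSat S (pmF 2 3 4) (Fin.snoc (Fin.snoc ![b,a,g] x : Fin 4 → ZFSet) y : Fin 5 → ZFSet) ↔ ZFSet.pair x y ∈ g :=
    fun x hx y hy => sat_pm h 2 3 4 _ hx hy
  have key2 : ∀ x ∈ S, ∀ y ∈ S, ∀ z ∈ S, ZSat S (pmF 2 3 5) (Fin.snoc (Fin.snoc (Fin.snoc ![b,a,g] x : Fin 4 → ZFSet) y : Fin 5 → ZFSet) z : Fin 6 → ZFSet) ↔ ZFSet.pair x z ∈ g :=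
    fun x hx y hy z hz => sat_pm h 2 3 5 _ hx hz
  rw [funF, sat_all]
  simp only [sat_imp, sat_ex, sat_and, sat_all]
  constructor
  · intro H x hx
    have hx' := h.1 _ ha _ hx
    obtain ⟨y, hy, hp, hu⟩ := H x hx' hx
    refine ⟨y, (key x hx' y hy).1 hp, fun z hz => ?_⟩
    have hz' := pair_mem_of h hg hz
    exact hu z hz' ((key2 x hx' y hy z hz').2 hz)
  · intro H x hx hxa
    obtain ⟨y, hp, hu⟩ := H x hxa
    have hy := pair_mem_of h hg hp
    exact ⟨y, hy, (key x hx y hy).2 hp, fun z hz hq => hu z ((key2 x hx y hy z hz).1 hq)⟩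

def surjF : Fm 3 := andF (andF subF funF) srjF

theorem sat_surj (h : Good S) {g a b : ZFSet} (hg : g ∈ S) (ha : a ∈ S) (hb : b ∈ S) :
    ZSat S surjF ![b, a, g] ↔ SurjFun g a b := by
  simp only [surjF, sat_and]
  rw [sat_sub h hg ha hb, sat_fun h hg ha, sat_srj h ha hb]; rfl

/-- f, p, q -/
def compF : Fm 3 := exF (exF (exF (andF (opF 1 3 4) (andF (pmF 0 4 5) (opF 2 3 5)))))

theorem sat_comp (h : Good S) {f p q : ZFSet} (hp : p ∈ S) (hq : q ∈ S) :
    ZSat S compF (Fin.snoc (Fin.snoc ![f] p : Fin 2 → ZFSet) q : Fin 3 → ZFSet) ↔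
      ∃ x ∈ S, ∃ y ∈ S, ∃ z ∈ S, p = ZFSet.pair x y ∧ ZFSet.pair y z ∈ f ∧ q = ZFSet.pair x z := by
  simp only [compF, sat_ex, sat_and]
  refine exists_congr fun x => and_congr_right fun hx => exists_congr fun y =>
    and_congr_right fun hy => exists_congr fun z => and_congr_right fun hz => ?_
  exact and_congr (sat_op h 1 3 4 _ hp hx hy) (and_congr (sat_pm h 0 4 5 _ hy hz)
    (sat_op h 2 3 5 _ hq hx hz))

theorem pair_mem_of' (h : Good S) {g x y : ZFSet} (hg : g ∈ S) (hp : ZFSet.pair x y ∈ g) : x ∈ S := by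
  have h1 := h.1 _ hg _ hp
  have h2 : ({x, y} : ZFSet) ∈ S := h.1 _ h1 _ (by simp [ZFSet.pair])
  exact h.1 _ h2 _ (by simp)

theorem comp_ex (hS : ModelsZFCminus S) {f g a b c : ZFSet} (hf : f ∈ S) (hg : g ∈ S)
    (sg : SurjFun g b a) (sf : SurjFun f a c) : ∃ k ∈ S, SurjFun k b c := by
  have h := good_of hS
  obtain ⟨⟨g1, g2⟩, g3⟩ := sg
  obtain ⟨⟨f1, f2⟩, f3⟩ := sf
  have hrep := hS.2.2.2.2.2.2.1 1 compF ![f] (by intro i; fin_cases i; exact hf) g hg ?_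
  · obtain ⟨k, hk, hk'⟩ := hrep
    have hk2 : ∀ x z, ZFSet.pair x z ∈ k ↔ ∃ y, ZFSet.pair x y ∈ g ∧ ZFSet.pair y z ∈ f := by
      intro x z
      rw [hk']
      constructor
      · rintro ⟨p, hp, hq, hs⟩
        rw [sat_comp h (h.1 _ hg _ hp) hq] at hs
        obtain ⟨x', _, y, _, z', _, rfl, h2, h3⟩ := hs
        obtain ⟨rfl, rfl⟩ := ZFSet.pair_inj.1 h3
        exact ⟨y, hp, h2⟩
      · rintro ⟨y, h1, h2⟩
        have hx := pair_mem_of' h hg h1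
        have hy := pair_mem_of h hg h1
        have hz := pair_mem_of h hf h2
        refine ⟨_, h1, h.pair hx hz, ?_⟩
        rw [sat_comp h (h.1 _ hg _ h1) (h.pair hx hz)]
        exact ⟨x, hx, y, hy, z, hz, rfl, h2, rfl⟩
    refine ⟨k, hk, ⟨?_, ?_⟩, ?_⟩
    · intro q hq
      obtain ⟨p, hp, hqS, hs⟩ := (hk' q).1 hq
      rw [sat_comp h (h.1 _ hg _ hp) hqS] at hs
      obtain ⟨x', _, y, _, z', _, rfl, h2, rfl⟩ := hs
      rw [ZFSet.pair_mem_prod]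
      exact ⟨(ZFSet.pair_mem_prod.1 (g1 hp)).1, (ZFSet.pair_mem_prod.1 (f1 h2)).2⟩
    · intro x hx
      obtain ⟨y, hy, uy⟩ := g2 x hx
      obtain ⟨z, hz, uz⟩ := f2 y (ZFSet.pair_mem_prod.1 (g1 hy)).2
      refine ⟨z, (hk2 _ _).2 ⟨y, hy, hz⟩, ?_⟩
      intro w hw
      obtain ⟨y', h1, h2⟩ := (hk2 _ _).1 hw
      obtain rfl := uy _ h1
      exact uz _ h2
    · intro z hz
      obtain ⟨y, hy, h2⟩ := f3 z hz
      obtain ⟨x, hx, h1⟩ := g3 y hy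
      exact ⟨x, hx, (hk2 _ _).2 ⟨y, h1, h2⟩⟩
  · intro p hp
    have hpS := h.1 _ hg _ hp
    obtain ⟨x, hx, y, hy, rfl⟩ := ZFSet.mem_prod.1 (g1 hp)
    obtain ⟨z, hz, uz⟩ := f2 y hy
    have hxS := pair_mem_of' h hg hp
    have hyS := pair_mem_of h hg hp
    have hzS := pair_mem_of h hf hz
    refine ⟨ZFSet.pair x z, ⟨h.pair hxS hzS, ?_⟩, ?_⟩
    · rw [sat_comp h hpS (h.pair hxS hzS)]
      exact ⟨x, hxS, y, hyS, z, hzS, rfl, hz, rfl⟩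
    · rintro q ⟨hq, hs⟩
      rw [sat_comp h hpS hq] at hs
      obtain ⟨x', _, y', _, z', _, h1, h2, rfl⟩ := hs
      obtain ⟨rfl, rfl⟩ := ZFSet.pair_inj.1 h1
      rw [uz _ h2]

def cardF : Fm 1 := .all (.imp (memF 1 0) (.all (ntF surjF)))

theorem sat_card (h : Good S) {κ : ZFSet} (hκ : κ ∈ S) :
    ZSat S cardF ![κ] ↔ ∀ α ∈ κ, ∀ f ∈ S, ¬ SurjFun f α κ := by
  have e : ∀ α f : ZFSet, (Fin.snoc (Fin.snoc ![κ] α : Fin 2 → ZFSet) f : Fin 3 → ZFSet) = ![κ, α, f] := by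
    intro α f; funext i; fin_cases i <;> rfl
  have key : ∀ α ∈ S, ∀ f ∈ S, ZSat S surjF (Fin.snoc (Fin.snoc ![κ] α : Fin 2 → ZFSet) f : Fin 3 → ZFSet)
      ↔ SurjFun f α κ := by
    intro α hα f hf
    rw [e]; exact sat_surj h hf hα hκ
  constructor
  · intro H α hα f hf hs
    have hα' := h.1 _ hκ _ hα
    exact H α hα' hα f hf ((key α hα' f hf).2 hs)
  · intro H α hα hακ f hf hs
    exact H α hακ f hf ((key α hα f hf).1 hs)

theorem surj_ex {μ γ : ZFSet} (hS : ModelsZFCminus S) (hl : IsLargestCardIn S μ)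
    (hγ : γ ∈ S) (oγ : γ.IsOrdinal) :
    γ ⊆ μ ∨ ∃ α, (α ∈ μ ∨ α = μ) ∧ ∃ f ∈ S, SurjFun f α γ := by
  obtain ⟨h1, h2, h3⟩ := hl
  have key : ∀ α : ZFSet, α ∈ S → α.IsOrdinal → ∀ f ∈ S, SurjFun f α γ →
      ∃ α, (α ∈ μ ∨ α = μ) ∧ ∃ f ∈ S, SurjFun f α γ := by
    intro α
    induction α using ZFSet.inductionOn with
    | h α ih =>
    intro hα oα f hf sf
    by_cases c : IsCardIn S α
    · exact ⟨α, ((oα.subset_iff_eq_or_mem h2.1).1 (h3 _ hα c)).symm, f, hf, sf⟩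
    · unfold IsCardIn at c
      push Not at c
      obtain ⟨β, hβ, g, hg, sg⟩ := c oα
      obtain ⟨k, hk, sk⟩ := comp_ex hS hf hg sg sf
      exact ih β hβ (hS.1 _ hα _ hβ) (oα.mem hβ) k hk sk
  by_cases c : IsCardIn S γ
  · exact Or.inl (h3 _ hγ c)
  · unfold IsCardIn at c
    push Not at c
    obtain ⟨β, hβ, g, hg, sg⟩ := c oγ
    exact Or.inr (key β (hS.1 _ hγ _ hβ) (oγ.mem hβ) g hg sg)

/-! elementarity -/
variable {T : Set ZFSet} {π : ZFSet → ZFSet}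

theorem el_mem (h : IsElem S T π) {x y : ZFSet} (hx : x ∈ S) (hy : y ∈ S) : x ∈ y ↔ π x ∈ π y := by
  have := h.2 2 (memF 0 1) ![x, y] (by intro i; fin_cases i <;> assumption)
  simpa [sat_mem] using this

theorem el1 (h : IsElem S T π) (φ : Fm 1) {x : ZFSet} (hx : x ∈ S) :
    ZSat S φ ![x] ↔ ZSat T φ ![π x] := by
  have := h.2 1 φ ![x] (by intro i; fin_cases i; assumption)
  have e : (fun i => π ((![x] : Fin 1 → ZFSet) i)) = ![π x] := by funext i; fin_cases i; rfl
  rwa [e] at this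

theorem el3 (h : IsElem S T π) (φ : Fm 3) {x y z : ZFSet} (hx : x ∈ S) (hy : y ∈ S) (hz : z ∈ S) :
    ZSat S φ ![x, y, z] ↔ ZSat T φ ![π x, π y, π z] := by
  have := h.2 3 φ ![x, y, z] (by intro i; fin_cases i <;> assumption)
  have e : (fun i => π ((![x, y, z] : Fin 3 → ZFSet) i)) = ![π x, π y, π z] := by
    funext i; fin_cases i <;> rfl
  rwa [e] at this

/-! cardinalities -/
open Cardinal in
theorem mk_le_of_surj {f a b : ZFSet} (h : SurjFun f a b) : #{x // x ∈ b} ≤ #{x // x ∈ a} := by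
  obtain ⟨⟨h1, h2⟩, h3⟩ := h
  choose! F hF hF' using h3
  refine Cardinal.mk_le_of_injective (f := fun y : {x // x ∈ b} => (⟨F y, hF _ y.2⟩ : {x // x ∈ a})) ?_
  rintro ⟨y, hy⟩ ⟨z, hz⟩ e
  simp only [Subtype.mk.injEq] at e
  have hy' := hF' y hy
  have hz' := hF' z hz
  rw [← e] at hz'
  exact Subtype.ext ((h2 _ (hF y hy)).unique hy' hz')

theorem func_pairSep {a b : ZFSet} (F : ZFSet → ZFSet) (hF : ∀ x ∈ a, F x ∈ b) :
    ZFSet.IsFunc a b (ZFSet.pairSep (fun x y => y = F x) a b) := by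
  constructor
  · intro p hp
    obtain ⟨x, hx, y, hy, rfl, _⟩ := ZFSet.mem_pairSep.1 hp
    exact ZFSet.pair_mem_prod.2 ⟨hx, hy⟩
  · intro x hx
    refine ⟨F x, ZFSet.mem_pairSep.2 ⟨x, hx, _, hF x hx, rfl, rfl⟩, ?_⟩
    intro y hy
    obtain ⟨x', _, y', _, e, e'⟩ := ZFSet.mem_pairSep.1 hy
    obtain ⟨rfl, rfl⟩ := ZFSet.pair_inj.1 e
    exact e'

open Cardinal in
theorem surj_of_mk_le {a b : ZFSet} (hb : ∃ y, y ∈ b) (h : #{x // x ∈ b} ≤ #{x // x ∈ a}) :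
    ∃ f, SurjFun f a b := by
  obtain ⟨i⟩ := h
  obtain ⟨y0, hy0⟩ := hb
  have : Nonempty {x // x ∈ b} := ⟨⟨y0, hy0⟩⟩
  classical
  let F : ZFSet → ZFSet := fun x => if hx : x ∈ a then (Function.invFun i ⟨x, hx⟩ : {x // x ∈ b}) else y0
  refine ⟨_, func_pairSep (a := a) (b := b) F ?_, ?_⟩
  · intro x hx
    simp only [F, hx, dif_pos]; exact Subtype.prop _
  · intro y hy
    refine ⟨i ⟨y, hy⟩, (i ⟨y, hy⟩).2, ZFSet.mem_pairSep.2 ⟨_, (i ⟨y, hy⟩).2, y, hy, rfl, ?_⟩⟩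
    simp [F, Function.leftInverse_invFun i.injective _]

end FPM

namespace FPM

/-- regular cardinals: bounding -/
theorem reg_bound {μ ξ : ZFSet} (hμ : IsRegularIn Set.univ μ) (hξ : ξ ∈ μ) (F : ZFSet → ZFSet)
    (hF : ∀ x ∈ ξ, F x ∈ μ) : ∃ ρ ∈ μ, ∀ x ∈ ξ, F x ∈ ρ := by
  obtain ⟨h1, h2, _, h3, _, h4⟩ := hμ
  by_contra hcon
  push Not at hcon
  have := h4 ξ trivial (h3.mem hξ) ⟨ZFSet.pairSep (fun x y => y = F x) ξ μ, trivial,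
    func_pairSep F hF, ?_⟩
  · exact ZFSet.mem_irrefl _ (this hξ)
  · intro ρ hρ
    obtain ⟨x, hx, hn⟩ := hcon ρ hρ
    refine ⟨x, hx, F x, ZFSet.mem_pairSep.2 ⟨x, hx, _, hF x hx, rfl, rfl⟩, ?_⟩
    rcases (h3.mem (hF x hx)).mem_trichotomous (h3.mem hρ) with h | h | h
    · exact absurd h hn
    · exact Or.inr h.symm
    · exact Or.inl h

theorem reg_limit {μ ξ : ZFSet} (hμ : IsRegularIn Set.univ μ) (hξ : ξ ∈ μ) :
    ∃ ξ' ∈ μ, ξ ∈ ξ' := by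
  have hone : (insert ∅ ∅ : ZFSet) ∈ μ := hμ.1 (ZFSet.omega_succ ZFSet.omega_zero)
  obtain ⟨ρ, hρ, h⟩ := reg_bound hμ hone (fun _ => ξ) (fun _ _ => hξ)
  exact ⟨ρ, hρ, h ∅ (by simp)⟩

open Cardinal in
theorem succ_bound {μ ν : ZFSet} (hμ : IsRegularIn Set.univ μ) (hν : IsCardIn Set.univ ν)
    (hμν : μ ∈ ν) (hc : ∀ γ ∈ ν, #{x // x ∈ γ} ≤ #{x // x ∈ μ})
    (F : ZFSet → ZFSet) (hF : ∀ x ∈ μ, F x ∈ ν) : ∃ δ ∈ ν, ∀ x ∈ μ, F x ∈ δ := by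
  by_contra hcon
  push Not at hcon
  have hinf : ℵ₀ ≤ #{x // x ∈ μ} := by
    by_contra hlt
    rw [not_le, Cardinal.lt_aleph0_iff_finite] at hlt
    have hfin : Set.Finite {x | x ∈ μ} := hlt
    have hwf : ∃ m ∈ {x | x ∈ μ}, ∀ x ∈ {x | x ∈ μ}, ¬ (m ∈ x) := by
      have hne : {x | x ∈ μ}.Nonempty := ⟨∅, hμ.1 ZFSet.omega_zero⟩
      obtain ⟨m, hm, hm'⟩ := Set.exists_max_image _ ZFSet.rank hfin hne
      exact ⟨m, hm, fun x hx hmx => absurd (hm' x hx) (not_le.2 (ZFSet.rank_lt_of_mem hmx))⟩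
    obtain ⟨m, hm, hm'⟩ := hwf
    obtain ⟨x, hx, hmx⟩ := reg_limit hμ hm
    exact hm' x hx hmx
  have hsub : {x | x ∈ ν} ⊆ ⋃ i : {x // x ∈ μ}, {x | x ∈ insert (F i) (F i)} := by
    intro δ hδ
    obtain ⟨x, hx, hn⟩ := hcon δ hδ
    refine Set.mem_iUnion.2 ⟨⟨x, hx⟩, ?_⟩
    have := ((hν.1.mem (hF x hx)).notMem_iff_subset (hν.1.mem hδ)).1 hn
    rcases ((hν.1.mem hδ).subset_iff_eq_or_mem (hν.1.mem (hF x hx))).1 this with h | h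
    · exact ZFSet.mem_insert_iff.2 (Or.inl h)
    · exact ZFSet.mem_insert_iff.2 (Or.inr h)
  have hle : #{x // x ∈ ν} ≤ #{x // x ∈ μ} := by
    calc #{x // x ∈ ν} ≤ #(⋃ i : {x // x ∈ μ}, {x | x ∈ insert (F i) (F i)} : Set ZFSet) :=
          Cardinal.mk_le_mk_of_subset hsub
      _ ≤ Cardinal.sum fun i : {x // x ∈ μ} => #{x | x ∈ insert (F i) (F i)} :=
          Cardinal.mk_iUnion_le_sum_mk
      _ ≤ Cardinal.sum fun _ : {x // x ∈ μ} => #{x // x ∈ μ} := by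
          refine Cardinal.sum_le_sum _ _ fun i => ?_
          have e : {x | x ∈ insert (F i) (F i)} = insert (F i) {x | x ∈ F i} := by
            ext x; simp
          rw [e]
          refine Cardinal.mk_insert_le.trans ?_
          refine (add_le_add (hc _ (hF _ i.2)) (le_trans (Cardinal.one_le_aleph0) hinf)).trans ?_
          rw [Cardinal.add_eq_self hinf]
      _ ≤ #{x // x ∈ μ} := by
          rw [Cardinal.sum_const', Cardinal.mul_eq_self hinf]
  obtain ⟨f, hf⟩ := surj_of_mk_le ⟨μ, hμν⟩ hle
  exact hν.2 μ hμν f trivial hf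

section main
variable {μ ν M N : ZFSet} {π : ZFSet → ZFSet}

theorem main_cont
    (hμ : IsRegularIn Set.univ μ)
    (oν : ν.IsOrdinal)
    (hM : ModelsZFCminus M.toSet) (hN : ModelsZFCminus N.toSet)
    (hoM : ∀ x : ZFSet, (x ∈ M ∧ x.IsOrdinal) ↔ x ∈ ν)
    (hlcM : IsLargestCardIn M.toSet μ)
    (hπ : IsElem M.toSet N.toSet π)
    (hinc : ∀ α ∈ ν, α ⊆ π α) (hμf : π μ = μ) (hμν : μ ∈ ν)
    (s : ZFSet → ZFSet) (hs : ∀ ξ ∈ μ, s ξ ∈ ν)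
    (hsi : ∀ ξ η : ZFSet, ξ ∈ η → η ∈ μ → s ξ ∈ s η)
    {γ : ZFSet} (hγ : γ ∈ ν) (hγs : ∀ x, x ∈ γ ↔ ∃ ξ ∈ μ, x ∈ s ξ) :
    ∀ η ∈ π γ, ∃ ξ ∈ μ, η ∈ π (s ξ) := by
  have oμ : μ.IsOrdinal := oν.mem hμν
  have oγ : γ.IsOrdinal := oν.mem hγ
  have inM : ∀ x ∈ ν, x ∈ M.toSet := fun x hx => ((hoM x).2 hx).1
  have hsge : ∀ ξ, ξ ∈ μ → ξ ⊆ s ξ := by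
    intro ξ
    induction ξ using ZFSet.inductionOn with
    | h ξ ih =>
    intro hξ η hη
    have hημ := oμ.mem_trans hη hξ
    exact (oμ.mem hημ).mem_of_subset_of_mem (oν.mem (hs ξ hξ)) (ih η hη hημ) (hsi _ _ hη hξ)
  have hμγ : μ ⊆ γ := by
    intro ξ hξ
    obtain ⟨ξ', h1, h2⟩ := reg_limit hμ hξ
    exact (hγs ξ).2 ⟨ξ', h1, hsge ξ' h1 h2⟩
  have hsγ : ∀ ξ ∈ μ, s ξ ∈ γ := by
    intro ξ hξ
    obtain ⟨ξ', h1, h2⟩ := reg_limit hμ hξ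
    exact (hγs _).2 ⟨ξ', h1, hsi _ _ h2 h1⟩
  rcases (oμ.subset_iff_eq_or_mem oγ).1 hμγ with rfl | hlt
  · intro η hη
    rw [hμf] at hη
    obtain ⟨ξ', h1, h2⟩ := reg_limit hμ hη
    exact ⟨ξ', h1, hinc _ (hs _ h1) (hsge ξ' h1 h2)⟩
  rcases surj_ex hM hlcM (inM γ hγ) oγ with h | ⟨α, hα, g, hg, sg⟩
  · exact absurd (h hlt) (ZFSet.mem_irrefl _)
  have gM := good_of hM
  have gN := good_of hN
  have hbd : ∀ ξ ∈ μ, ξ ⊆ α → ∃ ρ ∈ μ, ∀ x ∈ ξ, ∀ y, ZFSet.pair x y ∈ g → y ∈ s ρ := by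
    intro ξ hξ hξα
    have h1 : ∀ x ∈ ξ, ∃ ρ ∈ μ, ∀ y, ZFSet.pair x y ∈ g → y ∈ s ρ := by
      intro x hx
      obtain ⟨y, hy, uy⟩ := sg.1.2 x (hξα hx)
      obtain ⟨ρ, hρ, hyρ⟩ := (hγs y).1 (ZFSet.pair_mem_prod.1 (sg.1.1 hy)).2
      exact ⟨ρ, hρ, fun z hz => by rw [uy z hz]; exact hyρ⟩
    choose! F hF hF' using h1
    obtain ⟨ρ, hρ, hb⟩ := reg_bound hμ hξ F hF
    refine ⟨ρ, hρ, fun x hx y hy => ?_⟩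
    exact (oν.mem (hs ρ hρ)).mem_trans (hF' x hx y hy) (hsi _ _ (hb x hx) hρ)
  rcases hα with hα | rfl
  · exfalso
    obtain ⟨ρ, hρ, hb⟩ := hbd α hα (fun _ h => h)
    obtain ⟨x, hx, hp⟩ := sg.2 (s ρ) (hsγ ρ hρ)
    exact ZFSet.mem_irrefl _ (hb x hx _ hp)
  intro η hη
  have hαM := inM _ hμν
  have hγM := inM _ hγ
  have e1 := (el3 hπ srjF hγM hαM hg).1 ((sat_srj gM hαM hγM).2 sg.2)
  rw [sat_srj gN (hπ.1 _ hαM) (hπ.1 _ hγM)] at e1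
  obtain ⟨ζ, hζ, hp⟩ := e1 η hη
  rw [hμf] at hζ
  obtain ⟨ξ, hξ, hζξ⟩ := reg_limit hμ hζ
  obtain ⟨ρ, hρ, hb⟩ := hbd ξ hξ (oμ.subset_of_mem hξ)
  have hξν := oν.mem_trans hξ hμν
  have e2 := (el3 hπ bndF hg (inM _ hξν) (inM _ (hs ρ hρ))).1
    ((sat_bnd gM (inM _ hξν)).2 fun x hx y _ hy => hb x hx y hy)
  rw [sat_bnd gN (hπ.1 _ (inM _ hξν))] at e2
  exact ⟨ρ, hρ, e2 ζ (hinc ξ hξν hζξ) η (pair_mem_of gN (hπ.1 _ hg) hp) hp⟩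

theorem main
    (hμ : IsRegularIn Set.univ μ)
    (hν : CardSuccIn Set.univ μ ν)
    (hM : ModelsZFCminus M.toSet) (hN : ModelsZFCminus N.toSet)
    (hoM : ∀ x : ZFSet, (x ∈ M ∧ x.IsOrdinal) ↔ x ∈ ν)
    (hoN : ∀ x : ZFSet, (x ∈ N ∧ x.IsOrdinal) ↔ x ∈ ν)
    (hlcM : IsLargestCardIn M.toSet μ)
    (hlcN : IsLargestCardIn N.toSet μ)
    (hπ : IsElem M.toSet N.toSet π) : MuClub μ ν {α : ZFSet | α ∈ ν ∧ π α = α} := by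
  have oν : ν.IsOrdinal := hν.2.1.1
  have hμν : μ ∈ ν := hν.2.2.1
  have oμ : μ.IsOrdinal := oν.mem hμν
  have inM : ∀ x ∈ ν, x ∈ M.toSet := fun x hx => ((hoM x).2 hx).1
  have gM := good_of hM
  have gN := good_of hN
  have hpord : ∀ x ∈ ν, π x ∈ ν := by
    intro x hx
    have := (el1 hπ ordF (inM x hx)).1 ((sat_ord gM (inM x hx)).2 (oν.mem hx))
    rw [sat_ord gN (hπ.1 _ (inM x hx))] at this
    exact (hoN _).1 ⟨hπ.1 _ (inM x hx), this⟩
  have hpm : ∀ x ∈ ν, ∀ y ∈ ν, x ∈ y → π x ∈ π y := fun x hx y hy h =>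
    (el_mem hπ (inM x hx) (inM y hy)).1 h
  have hinc : ∀ α, α ∈ ν → α ⊆ π α := by
    intro α
    induction α using ZFSet.inductionOn with
    | h α ih =>
    intro hα η hη
    have hην := oν.mem_trans hη hα
    exact (oν.mem hην).mem_of_subset_of_mem (oν.mem (hpord α hα)) (ih η hη hην) (hpm _ hην _ hα hη)
  have hμf : π μ = μ := by
    refine le_antisymm (a := π μ) (b := μ) ?_ (hinc μ hμν)
    have h1 := (el1 hπ cardF (inM μ hμν)).1 ((sat_card gM (inM μ hμν)).2 hlcM.2.1.2)
    rw [sat_card gN (hπ.1 _ (inM μ hμν))] at h1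
    exact hlcN.2.2 _ (hπ.1 _ (inM μ hμν)) ⟨oν.mem (hpord μ hμν), h1⟩
  have cont := fun s hs hsi γ hγ hγs =>
    main_cont hμ oν hM hN hoM hlcM hπ hinc hμf hμν s hs hsi (γ := γ) hγ hγs
  have hc : ∀ γ ∈ ν, Cardinal.mk {x // x ∈ γ} ≤ Cardinal.mk {x // x ∈ μ} := by
    intro γ hγ
    rcases surj_ex hM hlcM (inM γ hγ) (oν.mem hγ) with h | ⟨α, hα, g, hg, sg⟩
    · exact Cardinal.mk_le_mk_of_subset (s := {x | x ∈ γ}) (t := {x | x ∈ μ}) (fun x hx => h hx)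
    · refine (mk_le_of_surj sg).trans ?_
      have h : α ⊆ μ := by
        rcases hα with h | rfl
        · exact oμ.subset_of_mem h
        · exact fun _ h => h
      exact Cardinal.mk_le_mk_of_subset (s := {x | x ∈ α}) (t := {x | x ∈ μ}) (fun x hx => h hx)
  have hbound := fun F hF => succ_bound hμ hν.2.1 hμν hc F hF
  refine ⟨fun x hx => hx.1, ?_, ?_⟩
  · intro β hβ
    classical
    let G : (ξ : ZFSet) → ((η : ZFSet) → η ∈ ξ → ZFSet) → ZFSet := fun ξ r =>
      if h : ∃ δ, δ ∈ ν ∧ β ∈ δ ∧ ∀ η (hη : η ∈ ξ), π (r η hη) ∈ δ then h.choose else ∅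
    let s : ZFSet → ZFSet := ZFSet.mem_wf.fix G
    have hs1 : ∀ ξ, s ξ = G ξ (fun η _ => s η) := fun ξ => ZFSet.mem_wf.fix_eq G ξ
    have hs : ∀ ξ, ξ ∈ μ → s ξ ∈ ν ∧ β ∈ s ξ ∧ ∀ η ∈ ξ, π (s η) ∈ s ξ := by
      intro ξ
      induction ξ using ZFSet.inductionOn with
      | h ξ ih =>
      intro hξ
      have hex : ∃ δ, δ ∈ ν ∧ β ∈ δ ∧ ∀ η (hη : η ∈ ξ), π (s η) ∈ δ := by
        obtain ⟨δ, hδ, h⟩ := hbound (fun η => if η ∈ ξ then π (s η) else β) (by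
          intro η hη
          by_cases c : η ∈ ξ
          · simp only [c, if_true]; exact hpord _ (ih η c hη).1
          · simp only [c, if_false]; exact hβ)
        refine ⟨δ, hδ, ?_, ?_⟩
        · have := h ξ hξ
          simpa [ZFSet.mem_irrefl] using this
        · intro η hη
          have := h η (oμ.mem_trans hη hξ)
          simpa [hη] using this
      have e : s ξ = hex.choose := by
        rw [hs1]; exact dif_pos hex
      rw [e]; exact hex.choose_spec
    have hsν : ∀ ξ ∈ μ, s ξ ∈ ν := fun ξ hξ => (hs ξ hξ).1
    have hsi : ∀ ξ η : ZFSet, ξ ∈ η → η ∈ μ → s ξ ∈ s η := by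
      intro ξ η h hη
      have hξ := oμ.mem_trans h hη
      exact (oν.mem (hsν ξ hξ)).mem_of_subset_of_mem (oν.mem (hsν η hη)) (hinc _ (hsν ξ hξ))
        ((hs η hη).2.2 ξ h)
    obtain ⟨δ, hδ, hsδ⟩ := hbound s hsν
    let γ := ZFSet.sep (fun x => ∃ ξ ∈ μ, x ∈ s ξ) δ
    have hγs : ∀ x, x ∈ γ ↔ ∃ ξ ∈ μ, x ∈ s ξ := by
      intro x
      simp only [γ, ZFSet.mem_sep]
      refine ⟨fun h => h.2, fun h => ⟨?_, h⟩⟩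
      obtain ⟨ξ, hξ, hx⟩ := h
      exact (oν.mem hδ).mem_trans hx (hsδ ξ hξ)
    have oγ : γ.IsOrdinal := by
      rw [ZFSet.isOrdinal_iff_forall_mem_isOrdinal]
      constructor
      · intro y hy z hz
        obtain ⟨ξ, hξ, hx⟩ := (hγs y).1 hy
        exact (hγs z).2 ⟨ξ, hξ, (oν.mem (hsν ξ hξ)).mem_trans hz hx⟩
      · intro y hy
        obtain ⟨ξ, hξ, hx⟩ := (hγs y).1 hy
        exact (oν.mem (hsν ξ hξ)).mem hx
    have hγ : γ ∈ ν := oγ.mem_of_subset_of_mem oν (y := δ) (fun x hx => (ZFSet.mem_sep.1 hx).1) hδ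
    refine ⟨γ, ⟨hγ, ?_⟩, Or.inl ?_⟩
    · refine le_antisymm (a := π γ) (b := γ) ?_ (hinc γ hγ)
      intro η hη
      obtain ⟨ξ, hξ, h⟩ := cont s hsν hsi γ hγ hγs η hη
      obtain ⟨ξ', h1, h2⟩ := reg_limit hμ hξ
      exact (hγs η).2 ⟨ξ', h1, (oν.mem (hsν ξ' h1)).mem_trans h ((hs ξ' h1).2.2 ξ h2)⟩
    · exact (hγs β).2 ⟨∅, hμ.1 ZFSet.omega_zero, (hs _ (hμ.1 ZFSet.omega_zero)).2.1⟩
  · intro s hs hsi γ hγ hsup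
    have hsν : ∀ ξ ∈ μ, s ξ ∈ ν := fun ξ hξ => (hs ξ hξ).1
    have hγs : ∀ x, x ∈ γ ↔ ∃ ξ ∈ μ, x ∈ s ξ := by
      intro x
      constructor
      · intro hx
        by_contra hcon
        push Not at hcon
        have ox := (oν.mem hγ).mem hx
        have := hsup.2.2 x ox (by
          rintro _ ⟨ξ, hξ, rfl⟩
          exact (ox.notMem_iff_subset (oν.mem (hsν ξ hξ))).1 (hcon ξ hξ))
        exact ZFSet.mem_irrefl _ (this hx)
      · rintro ⟨ξ, hξ, hx⟩
        exact hsup.2.1 _ ⟨ξ, hξ, rfl⟩ hx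
    refine ⟨hγ, le_antisymm (a := π γ) (b := γ) ?_ (hinc γ hγ)⟩
    intro η hη
    obtain ⟨ξ, hξ, h⟩ := cont s hsν hsi γ hγ hγs η hη
    rw [(hs ξ hξ).2] at h
    exact (hγs η).2 ⟨ξ, hξ, h⟩

end main
end FPM

/-- Let `μ` be a regular cardinal and `M, N` transitive models of ZFC⁻ with
`o(M) = o(N) = μ⁺` and `μ` the largest cardinal of both `M` and `N`.  If `π : M → N` is
elementary, then the set of fixed points of `π` belongs to the `μ`-club filter on `μ⁺`. -/
theorem fixed_points_mu_club' (μ ν M N : ZFSet)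
    (hμ : IsRegularIn Set.univ μ)
    (hν : CardSuccIn Set.univ μ ν)
    (hM : ModelsZFCminus M.toSet) (hN : ModelsZFCminus N.toSet)
    (hoM : ∀ x : ZFSet, (x ∈ M ∧ x.IsOrdinal) ↔ x ∈ ν)
    (hoN : ∀ x : ZFSet, (x ∈ N ∧ x.IsOrdinal) ↔ x ∈ ν)
    (hlcM : IsLargestCardIn M.toSet μ)
    (hlcN : IsLargestCardIn N.toSet μ)
    (π : ZFSet → ZFSet) (hπ : IsElem M.toSet N.toSet π) :
    {α : ZFSet | α ∈ ν ∧ π α = α} ∈ muClubFilter μ ν := by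
  exact Filter.mem_generate_of_mem (FPM.main hμ hν hM hN hoM hoN hlcM hlcN hπ)
end
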